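/- arXiv:1910.08255 — 3 statements merged into one kernel-verified Lean document; each statement's English description precedes it below -/
import Mathlib

section
/- Let f : 𝒜 → 𝒜 satisfy f(A + B·P) ≡ f(A) (mod P) for every A, B ∈ 𝒜 and every irreducible P ∈ 𝒫, and suppose that deg(f(A)) < q^{deg(A)} / (27·q·deg(A)) whenever deg(A) is sufficiently large. Then there exists a nonzero polynomial Q(X, Y) ∈ 𝒜[X, Y] such that Q(A, f(A)) = 0 for every A ∈ 𝒜. -/
open Polynomial

/-!
This is the auxiliary polynomial method. Let `q = #F`. Counting coefficients produces a nonzero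
`Q`, of controlled degrees in `X`, `Y` and `t`, with `Q(A, f A) = 0` for all `A` of degree `< M`.
The function `g A = Q(A, f A)` preserves congruences modulo irreducibles, and the growth bound on
`f` gives `deg (g A) < q ^ deg A` whenever `deg A ≥ M`. If `g` vanishes in degrees `< m` and
`deg A = m`, then reducing `A` modulo an irreducible `P` of degree `≤ m` shows `P ∣ g A`; hence
`t ^ q ^ m - t`, a squarefree product of such `P`, divides `g A`, and `g A = 0` by degree.
-/

open Filter

section CongruencePreserving

/-- The algebra of functions `R → R` preserving congruences modulo every irreducible element of `R`.
The condition on `f` in the main theorem is `f ∈ congruencePreserving F[X]`; being a subalgebra,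
this set then contains every function `A ↦ Q(A, f A)`. -/
def congruencePreserving (R : Type*) [CommRing R] : Subalgebra R (R → R) where
  carrier := {f | ∀ P, Irreducible P → ∀ A B, P ∣ A - B → P ∣ f A - f B}
  mul_mem' {f g} hf hg P hP A B h := by
    have hsplit : (f * g) A - (f * g) B = f A * (g A - g B) + (f A - f B) * g B := by
      simp only [Pi.mul_apply]; ring
    rw [hsplit]
    exact dvd_add ((hg P hP A B h).mul_left _) ((hf P hP A B h).mul_right _)
  add_mem' {f g} hf hg P hP A B h := by
    simpa only [Pi.add_apply, add_sub_add_comm] using dvd_add (hf P hP A B h) (hg P hP A B h)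
  algebraMap_mem' r P _ A B _ := by simp

variable {R : Type*} [CommRing R]

lemma id_mem_congruencePreserving : id ∈ congruencePreserving R :=
  fun _ _ _ _ h => h

lemma mem_congruencePreserving_of_dvd_add_mul_sub {f : R → R}
    (hf : ∀ A B P, Irreducible P → P ∣ f (A + B * P) - f A) : f ∈ congruencePreserving R := by
  rintro P hP A B ⟨C, hC⟩
  have hA : A = B + C * P := by linear_combination hC
  exact hA ▸ hf B C P hP

lemma eval_mem_congruencePreserving {σ : Type*} {x : σ → R → R}
    (hx : ∀ s, x s ∈ congruencePreserving R) (Q : MvPolynomial σ R) :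
    (fun A => MvPolynomial.eval (fun s => x s A) Q) ∈ congruencePreserving R := by
  have heval : (fun A => MvPolynomial.eval (fun s => x s A) Q) = MvPolynomial.aeval x Q := by
    funext A
    exact (MvPolynomial.map_aeval x (Pi.evalRingHom (fun _ => R) A) Q).symm
  rw [heval]
  exact (Subalgebra.mvPolynomial_aeval_coe (congruencePreserving R) (fun s => ⟨x s, hx s⟩) Q) ▸
    SetLike.coe_mem _

end CongruencePreserving

section Vanishing

lemma dvd_of_squarefree_of_forall_irreducible_dvd {R : Type*} [CommMonoidWithZero R]
    [UniqueFactorizationMonoid R] {s g : R} (hs : Squarefree s)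
    (h : ∀ p, Irreducible p → p ∣ s → p ∣ g) : s ∣ g := by
  induction s using WfDvdMonoid.induction_on_irreducible with
  | zero => exact (hs 0 (dvd_of_eq (mul_zero 0))).dvd
  | unit u hu => exact hu.dvd
  | mul a p _ hp ih =>
    obtain ⟨k, rfl⟩ := ih (hs.squarefree_of_dvd (dvd_mul_left a p))
      fun r hr hra => h r hr (hra.mul_left p)
    have hpa : ¬p ∣ a := fun hpa => hp.not_isUnit (hs p (mul_dvd_mul_left p hpa))
    have hpk : p ∣ k := (hp.prime.dvd_or_dvd (h p hp (dvd_mul_right p a))).resolve_left hpa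
    rw [mul_comm p]
    exact mul_dvd_mul_left a hpk

variable {F : Type*} [Field F] [Fintype F]

lemma eq_zero_of_forall_irreducible_dvd {g : F[X]} {m : ℕ} (hm : m ≠ 0)
    (hdeg : g ∈ degreeLT F (Fintype.card F ^ m))
    (h : ∀ P : F[X], Irreducible P → P.natDegree ≤ m → P ∣ g) : g = 0 := by
  have hsquarefree : Squarefree (X ^ Fintype.card F ^ m - X : F[X]) :=
    (galois_poly_separable (ringChar F) _ (dvd_pow
      ((CharP.cast_eq_zero_iff F _ _).1 (FiniteField.cast_card_eq_zero F)) hm)).squarefree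
  have hdvd : X ^ Fintype.card F ^ m - X ∣ g := by
    refine dvd_of_squarefree_of_forall_irreducible_dvd hsquarefree fun P hP hPdvd => h P hP ?_
    rw [← Nat.card_eq_fintype_card] at hPdvd
    exact Nat.le_of_dvd (Nat.pos_of_ne_zero hm)
      (hP.natDegree_dvd_of_dvd_X_pow_card_pow_sub_X hPdvd)
  refine eq_zero_of_dvd_of_degree_lt hdvd ?_
  rw [degree_eq_natDegree hsquarefree.ne_zero,
    FiniteField.X_pow_card_pow_sub_X_natDegree_eq F hm Fintype.one_lt_card]
  exact mem_degreeLT.1 hdeg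

lemma eq_zero_of_mem_congruencePreserving {g : F[X] → F[X]} (hg : g ∈ congruencePreserving F[X])
    {M : ℕ} (hM : M ≠ 0) (hsmall : ∀ A ∈ degreeLT F M, g A = 0)
    (hlarge : ∀ A, M ≤ A.natDegree → g A ∈ degreeLT F (Fintype.card F ^ A.natDegree)) : g = 0 := by
  have hvanish : ∀ m, M ≤ m → ∀ A ∈ degreeLT F m, g A = 0 := by
    intro m hm
    induction m, hm using Nat.le_induction with
    | base => exact hsmall
    | succ m hm ih =>
      intro A hA
      by_cases hAm : A ∈ degreeLT F m
      · exact ih A hAm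
      have hdeg : A.natDegree = m := by
        rw [mem_degreeLT] at hA hAm
        have hA0 : A ≠ 0 := by rintro rfl; simp at hAm
        rw [← natDegree_lt_iff_degree_lt hA0] at hA hAm
        lia
      refine eq_zero_of_forall_irreducible_dvd (m := m) (by lia)
        (hdeg ▸ hlarge A (hdeg ▸ hm)) fun P hP hPm => ?_
      have hAmod : P ∣ A - A % P := ⟨A / P, by
        linear_combination -EuclideanDomain.mod_add_div A P⟩
      have hmod : g (A % P) = 0 := ih _ <| mem_degreeLT.2 <|
        (degree_mod_lt A hP.ne_zero).trans_le (degree_le_of_natDegree_le hPm)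
      simpa only [hmod, sub_zero] using hg P hP A (A % P) hAmod
  funext A
  refine hvanish (max M (A.natDegree + 1)) (le_max_left _ _) A (mem_degreeLT.2 ?_)
  exact degree_le_natDegree.trans_lt (Nat.cast_lt.2 (by lia))

end Vanishing

section Siegel

lemma finrank_degreeLT (R : Type*) [Semiring R] [StrongRankCondition R] (n : ℕ) :
    Module.finrank R (degreeLT R n) = n := by
  rw [(degreeLTEquiv R n).finrank_eq, Module.finrank_fin_fun]

instance moduleFinite_degreeLT (R : Type*) [Semiring R] (n : ℕ) :
    Module.Finite R (degreeLT R n) :=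
  Module.Finite.equiv (degreeLTEquiv R n).symm

/-- The polynomial with monomials in `E` and prescribed coefficients, which are polynomials
of degree `< D`. Linearity over the constants `R` makes it accessible to dimension counting. -/
noncomputable def polynomialOfCoeffs {σ R : Type*} [CommSemiring R] (E : Finset (σ →₀ ℕ)) (D : ℕ) :
    (E → degreeLT R D) →ₗ[R] MvPolynomial σ R[X] :=
  ∑ e : E, (MvPolynomial.monomial e.1).restrictScalars R ∘ₗ
    (degreeLT R D).subtype ∘ₗ LinearMap.proj e

variable {σ R : Type*} [CommSemiring R] {E : Finset (σ →₀ ℕ)} {D : ℕ}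

lemma polynomialOfCoeffs_apply (c : E → degreeLT R D) :
    polynomialOfCoeffs E D c = ∑ e : E, MvPolynomial.monomial e.1 (c e : R[X]) := by
  simp [polynomialOfCoeffs]

lemma coeff_polynomialOfCoeffs (c : E → degreeLT R D) (e : E) :
    MvPolynomial.coeff e.1 (polynomialOfCoeffs E D c) = c e := by
  classical
  simp [polynomialOfCoeffs_apply, MvPolynomial.coeff_sum, MvPolynomial.coeff_monomial]

lemma polynomialOfCoeffs_injective :
    Function.Injective (polynomialOfCoeffs (R := R) E D) := by
  intro a b hab
  ext1 e
  rw [Subtype.ext_iff, ← coeff_polynomialOfCoeffs, hab, coeff_polynomialOfCoeffs]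

lemma natDegree_finsuppProd_pow_le (e : σ →₀ ℕ) (x : σ → R[X]) :
    (e.prod fun s k => x s ^ k).natDegree ≤ e.sum fun s k => k * (x s).natDegree :=
  (natDegree_prod_le _ _).trans (Finset.sum_le_sum fun _ _ => natDegree_pow_le)

lemma eval_polynomialOfCoeffs_mem_degreeLT {x : σ → R[X]} {L : ℕ}
    (hdeg : ∀ e ∈ E, D + (e.sum fun s k => k * (x s).natDegree) ≤ L) (c : E → degreeLT R D) :
    MvPolynomial.eval x (polynomialOfCoeffs E D c) ∈ degreeLT R L := by
  rw [polynomialOfCoeffs_apply, map_sum]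
  refine Submodule.sum_mem _ fun e _ => ?_
  rw [MvPolynomial.eval_monomial, mem_degreeLT]
  have hc : (c e : R[X]).degree < D := mem_degreeLT.1 (c e).2
  have hprod : (e.1.prod fun s k => x s ^ k).degree ≤ e.1.sum fun s k => k * (x s).natDegree :=
    degree_le_of_natDegree_le (natDegree_finsuppProd_pow_le e.1 x)
  calc ((c e : R[X]) * e.1.prod fun s k => x s ^ k).degree
      ≤ (c e : R[X]).degree + (e.1.prod fun s k => x s ^ k).degree := degree_mul_le _ _
    _ ≤ (c e : R[X]).degree + (e.1.sum fun s k => k * (x s).natDegree : ℕ) := by gcongr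
    _ < D + (e.1.sum fun s k => k * (x s).natDegree : ℕ) :=
      WithBot.add_lt_add_right (WithBot.coe_ne_bot) hc
    _ ≤ L := by exact_mod_cast hdeg e.1 e.2

lemma exists_polynomialOfCoeffs_eval_eq_zero {K ι : Type*} [Field K] [Fintype ι]
    (x : ι → σ → K[X]) {L : ℕ}
    (hdeg : ∀ i, ∀ e ∈ E, D + (e.sum fun s k => k * (x i s).natDegree) ≤ L)
    (hcard : Fintype.card ι * L < E.card * D) :
    ∃ c : E → degreeLT K D, c ≠ 0 ∧
      ∀ i, MvPolynomial.eval (x i) (polynomialOfCoeffs E D c) = 0 := by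
  let T : (E → degreeLT K D) →ₗ[K] (ι → degreeLT K L) := LinearMap.pi fun i =>
    LinearMap.codRestrict _ ((MvPolynomial.aeval (x i)).toLinearMap.restrictScalars K ∘ₗ
      polynomialOfCoeffs E D) fun c => eval_polynomialOfCoeffs_mem_degreeLT (hdeg i) c
  have hT : LinearMap.ker T ≠ ⊥ := by
    apply LinearMap.ker_ne_bot_of_finrank_lt
    simpa [Module.finrank_pi_fintype, finrank_degreeLT] using hcard
  obtain ⟨c, hc, hc0⟩ := Submodule.exists_mem_ne_zero_of_ne_bot hT
  exact ⟨c, hc0, fun i => congrArg Subtype.val (congrFun (LinearMap.mem_ker.1 hc) i)⟩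

end Siegel

section AuxiliaryPolynomial

variable {F : Type*} [Field F] [Fintype F]

lemma exists_mvPolynomial_eval_eq_zero {σ : Type*} {x : σ → F[X] → F[X]}
    (hx : ∀ s, x s ∈ congruencePreserving F[X]) {E : Finset (σ →₀ ℕ)} {D M : ℕ} (hM : M ≠ 0)
    (hcard : Fintype.card F ^ M * Fintype.card F ^ M < E.card * D)
    (hdeg : ∀ A, ∀ e ∈ E, D + (e.sum fun s k => k * (x s A).natDegree) ≤
      Fintype.card F ^ max M A.natDegree) :
    ∃ Q : MvPolynomial σ F[X], Q ≠ 0 ∧ ∀ A, MvPolynomial.eval (fun s => x s A) Q = 0 := by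
  have : Finite (degreeLT F M) := Module.finite_of_finite F
  have : Fintype (degreeLT F M) := Fintype.ofFinite _
  have hcard_degreeLT : Fintype.card (degreeLT F M) = Fintype.card F ^ M := by
    rw [Module.card_eq_pow_finrank (K := F), finrank_degreeLT]
  have hsmall (A : degreeLT F M) : max M (A : F[X]).natDegree = M :=
    max_eq_left (natDegree_le_of_degree_le (mem_degreeLT.1 A.2).le)
  obtain ⟨c, hc0, hc⟩ := exists_polynomialOfCoeffs_eval_eq_zero
    (fun (A : degreeLT F M) s => x s A) (fun A => hsmall A ▸ hdeg A) (hcard_degreeLT.symm ▸ hcard)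
  refine ⟨polynomialOfCoeffs E D c, (map_ne_zero_iff _ polynomialOfCoeffs_injective).2 hc0,
    congrFun (eq_zero_of_mem_congruencePreserving (eval_mem_congruencePreserving hx _) hM
      (fun A hA => hc ⟨A, hA⟩) fun A hA => ?_)⟩
  have hmem := eval_polynomialOfCoeffs_mem_degreeLT (hdeg A) c
  rwa [max_eq_right hA] at hmem

lemma exists_bivariate_eval_eq_zero {f : F[X] → F[X]} (hf : f ∈ congruencePreserving F[X])
    {D I J M : ℕ} (hM : M ≠ 0)
    (hcard : Fintype.card F ^ M * Fintype.card F ^ M < (I + 1) * (J + 1) * D)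
    (hdeg : ∀ A, D + (I * A.natDegree + J * (f A).natDegree) ≤
      Fintype.card F ^ max M A.natDegree) :
    ∃ Q : MvPolynomial (Fin 2) F[X], Q ≠ 0 ∧ ∀ A, MvPolynomial.eval ![A, f A] Q = 0 := by
  let x : Fin 2 → F[X] → F[X] := ![id, f]
  have hx : ∀ s, x s ∈ congruencePreserving F[X] :=
    Fin.forall_fin_two.2 ⟨id_mem_congruencePreserving, hf⟩
  have hpoint (A : F[X]) : (fun s => x s A) = ![A, f A] := by
    funext s; fin_cases s <;> rfl
  let d : Fin 2 →₀ ℕ := Finsupp.equivFunOnFinite.symm ![I, J]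
  have hbox : (Finset.Iic d).card = (I + 1) * (J + 1) := by
    rw [Finsupp.card_Iic, Finset.prod_subset (Finset.subset_univ _) fun i _ hi => by
      simp [Finsupp.notMem_support_iff.1 hi]]
    simp [d]
  have hdeg_box (A : F[X]) (e : Fin 2 →₀ ℕ) (he : e ∈ Finset.Iic d) :
      D + (e.sum fun s k => k * (x s A).natDegree) ≤ Fintype.card F ^ max M A.natDegree := by
    have heI : e 0 ≤ I := Finset.mem_Iic.1 he 0
    have heJ : e 1 ≤ J := Finset.mem_Iic.1 he 1
    rw [Finsupp.sum_fintype _ _ (by simp), Fin.sum_univ_two]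
    calc D + (e 0 * A.natDegree + e 1 * (f A).natDegree)
        ≤ D + (I * A.natDegree + J * (f A).natDegree) := by gcongr
      _ ≤ Fintype.card F ^ max M A.natDegree := hdeg A
  obtain ⟨Q, hQ0, hQ⟩ := exists_mvPolynomial_eval_eq_zero hx hM (hbox.symm ▸ hcard) hdeg_box
  exact ⟨Q, hQ0, fun A => hpoint A ▸ hQ A⟩

end AuxiliaryPolynomial

section Parameters

lemma mul_le_pow_of_le {q M m k : ℕ} (hq : 2 ≤ q) (hM : M ≠ 0) (hm : M ≤ m)
    (h : k * M ≤ q ^ M) : k * m ≤ q ^ m := by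
  induction m, hm using Nat.le_induction with
  | base => exact h
  | succ n hn ih =>
    calc k * (n + 1) ≤ k * (n * 2) := by gcongr; lia
      _ = k * n * 2 := by ring
      _ ≤ q ^ n * q := by gcongr
      _ = q ^ (n + 1) := (pow_succ q n).symm

lemma eventually_mul_le_pow {q : ℕ} (hq : 2 ≤ q) (k : ℕ) : ∀ᶠ m in atTop, k * m ≤ q ^ m := by
  have hlittle := (isLittleO_coe_const_pow_of_one_lt (R := ℝ) (r := q)
    (by exact_mod_cast hq)).const_mul_left (k : ℝ)
  filter_upwards [hlittle.bound one_pos] with m hm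
  rw [Real.norm_of_nonneg (by positivity), Real.norm_of_nonneg (by positivity), one_mul] at hm
  exact_mod_cast hm

lemma finite_setOf_natDegree_lt (R : Type*) [Semiring R] [Finite R] (n : ℕ) :
    {A : R[X] | A.natDegree < n}.Finite := by
  have : Finite (degreeLT R n) := Module.finite_of_finite R
  refine (Set.toFinite (degreeLT R n : Set R[X])).subset fun A hA => mem_degreeLT.2 ?_
  exact degree_le_natDegree.trans_lt (Nat.cast_lt.2 hA)

lemma eventually_forall_mul_max_natDegree_le_pow {R : Type*} [Semiring R] [Finite R] {q : ℕ}
    (hq : 2 ≤ q) {h : R[X] → ℕ} {N : ℕ}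
    (hN : ∀ A : R[X], N ≤ A.natDegree → h A * A.natDegree ≤ q ^ A.natDegree) :
    ∀ᶠ M in atTop, ∀ A : R[X], h A * max M A.natDegree ≤ q ^ max M A.natDegree := by
  have hlow : ∀ᶠ M in atTop, ∀ A ∈ {A : R[X] | A.natDegree < N + 1}, h A * M ≤ q ^ M :=
    (eventually_all_finite (finite_setOf_natDegree_lt R (N + 1))).2
      fun A _ => eventually_mul_le_pow hq (h A)
  filter_upwards [hlow, eventually_ne_atTop 0] with M hM hM0 A
  by_cases hA : A.natDegree < N + 1
  · exact mul_le_pow_of_le hq hM0 (le_max_left _ _) (hM A hA)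
  · exact mul_le_pow_of_le hq (by lia) (le_max_right _ _) (hN A (by lia))

lemma pow_mul_pow_lt_div_add_one_mul_mul_div {q M : ℕ} (hq : 2 ≤ q) (hM : 2 ≤ M) :
    q ^ M * q ^ M < (q ^ M / (3 * M) + 1) * (9 * q * M + 1) * (q ^ M / 3) := by
  have hZ : 4 ≤ q ^ M := (Nat.pow_le_pow_left hq 2).trans (Nat.pow_le_pow_right (by lia) hM)
  have hI : q ^ M < 3 * M * (q ^ M / (3 * M) + 1) := Nat.lt_mul_div_succ _ (by lia)
  have hD : q ^ M ≤ 3 * q * (q ^ M / 3) :=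
    calc q ^ M ≤ 3 * 2 * (q ^ M / 3) := by lia
      _ ≤ 3 * q * (q ^ M / 3) := by gcongr
  calc q ^ M * q ^ M < 3 * M * (q ^ M / (3 * M) + 1) * (3 * q * (q ^ M / 3)) :=
        Nat.mul_lt_mul_of_lt_of_le hI hD (by lia)
    _ = (q ^ M / (3 * M) + 1) * (9 * q * M) * (q ^ M / 3) := by ring
    _ ≤ (q ^ M / (3 * M) + 1) * (9 * q * M + 1) * (q ^ M / 3) := by gcongr; lia

-- With `n = deg A` and `h = deg (f A)`, each of the three summands takes a third of `q ^ max M n`.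
lemma div_add_div_mul_add_mul_le_pow_max {q M n h : ℕ} (hq : 2 ≤ q) (hM : M ≠ 0)
    (hh : 27 * q * h * max M n ≤ q ^ max M n) :
    q ^ M / 3 + (q ^ M / (3 * M) * n + 9 * q * M * h) ≤ q ^ max M n := by
  have hD : q ^ M ≤ q ^ max M n := Nat.pow_le_pow_right (by lia) (le_max_left _ _)
  have hI : 3 * (q ^ M / (3 * M)) * max M n ≤ q ^ max M n := by
    refine mul_le_pow_of_le hq hM (le_max_left _ _) ?_
    rw [mul_right_comm]
    exact Nat.mul_div_le _ _
  have hIn : q ^ M / (3 * M) * n ≤ q ^ M / (3 * M) * max M n := by gcongr; exact le_max_right _ _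
  have hJ : 9 * q * M * h ≤ 9 * q * max M n * h := by gcongr; exact le_max_left _ _
  have hD3 : 3 * (q ^ M / 3) ≤ q ^ M := Nat.mul_div_le _ _
  linarith

end Parameters

/-- If `f : 𝒜 → 𝒜` satisfies the congruence condition and
`deg(f(A)) < q^{deg A} / (27 q deg A)` for all `A` of sufficiently large degree, then there
is a nonzero two-variable polynomial `Q ∈ 𝒜[X, Y]` with `Q(A, f(A)) = 0` for all `A ∈ 𝒜`. -/
theorem ruzsa_polynomial_algebraic_relation {F : Type*} [Field F] [Fintype F]
    (q : ℕ) (hq : q = Fintype.card F)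
    (f : F[X] → F[X])
    (hcong : ∀ A B P : F[X], Irreducible P → P ∣ f (A + B * P) - f A)
    (hdeg : ∃ N : ℕ, ∀ A : F[X], N ≤ A.natDegree →
      ((f A).natDegree : ℝ) < (q : ℝ) ^ A.natDegree / (27 * (q : ℝ) * (A.natDegree : ℝ))) :
    ∃ Q : MvPolynomial (Fin 2) F[X], Q ≠ 0 ∧
      ∀ A : F[X], MvPolynomial.eval ![A, f A] Q = 0 := by
  subst hq
  have hq : 2 ≤ Fintype.card F := Fintype.one_lt_card
  obtain ⟨N, hN⟩ := hdeg
  have hgrowth (A : F[X]) (hA : N ≤ A.natDegree) :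
      27 * Fintype.card F * (f A).natDegree * A.natDegree ≤ Fintype.card F ^ A.natDegree := by
    have hmul := mul_le_of_le_div₀ (by positivity) (by positivity) (hN A hA).le
    norm_cast at hmul
    linarith
  obtain ⟨M, hM, hM2⟩ := ((eventually_forall_mul_max_natDegree_le_pow hq hgrowth).and
    (eventually_ge_atTop 2)).exists
  have hM0 : M ≠ 0 := by lia
  exact exists_bivariate_eval_eq_zero (mem_congruencePreserving_of_dvd_add_mul_sub hcong) hM0
    (pow_mul_pow_lt_div_add_one_mul_mul_div hq hM2)
    fun A => div_add_div_mul_add_mul_le_pow_max hq hM0 (hM A)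
end

section
/- Let U(t) ∈ 𝒜 with U′ ≠ 0 and write δ = deg(U). Let 0 ≤ m < n be integers. Then there exist positive constants C₈ depending only on p and U, and C₉ depending only on m, p, and U, such that: d_{m,n,U} ≥ δ·(1 − 1/p + 1/p² − 1/p³)·m·n − C₈·n − C₉. -/
open Polynomial

/-- `rad A`: the product of the distinct monic irreducible factors of `A`. -/
noncomputable def polyRad {F : Type*} [Field F] (A : Polynomial F) : Polynomial F :=
  ∏ᶠ P ∈ {P : Polynomial F | P.Monic ∧ Irreducible P ∧ P ∣ A}, P

/-!
Over an algebraic closure, the degree of `rad Δ` is at least the number of distinct roots of `Δ`,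
and these are the points that `U` maps into the set `Z` of `k`-th roots of unity for
`n - m ≤ k ≤ n`. A point where `U` takes a given value with multiplicity `e` is a zero of `U'` of
order at least `e - 1`, so the preimage of `Z` has at least `δ |Z| - deg U'` elements.

In characteristic `p` there are `k / p ^ v` roots of unity of order dividing `k`, where
`v = v_p(k)`, and a root shared by two exponents `k < l` of the window has order dividing
`l - k ≤ m`; hence `|Z|` is the sum of the `k / p ^ v` up to a constant depending on `m`. Expanding
`1 / p ^ v = 1 - (p - 1) ∑ 1 / p ^ j` over the `j ≥ 1` with `p ^ j ∣ k` and counting multiples of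
`p ^ j`, the average of `1 / p ^ v` over the window is
`1 - (p - 1) ∑ 1 / p ^ (2 j) = p / (p + 1)`, up to a total error of at most `1`. Truncating
`p / (p + 1) = 1 - 1/p + 1/p² - 1/p³ + ⋯` gives the stated coefficient.
-/

open Finset UniqueFactorizationMonoid

section DistinctRoots

variable {F K : Type*} [Field F] [Field K] [Algebra F K]

lemma polyRad_eq_radical [DecidableEq F] {A : F[X]} (hA : A ≠ 0) : polyRad A = radical A := by
  have hset : {P : F[X] | P.Monic ∧ Irreducible P ∧ P ∣ A} = primeFactors A := by
    ext P
    simp only [Set.mem_ofPred_eq, mem_coe, mem_primeFactors,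
      Polynomial.mem_normalizedFactors_iff hA, and_left_comm]
  rw [polyRad, hset, finprod_mem_coe_finset]
  rfl

lemma rootSet_polyRad {A : F[X]} (hA : A ≠ 0) : (polyRad A).rootSet K = A.rootSet K := by
  classical
  rw [polyRad_eq_radical hA]
  ext x
  rw [mem_rootSet_of_ne radical_ne_zero, mem_rootSet_of_ne hA]
  refine ⟨aeval_eq_zero_of_dvd_aeval_eq_zero radical_dvd_self, fun hx => ?_⟩
  obtain ⟨N, hN⟩ := exists_dvd_radical_self_pow hA
  have hpow : aeval x (radical A ^ N) = 0 := aeval_eq_zero_of_dvd_aeval_eq_zero hN hx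
  exact eq_zero_of_pow_eq_zero ((map_pow (aeval x) _ N).symm.trans hpow)

lemma ncard_rootSet_le_natDegree_polyRad {A : F[X]} (hA : A ≠ 0) :
    (A.rootSet K).ncard ≤ (polyRad A).natDegree := by
  classical
  rw [← rootSet_polyRad hA, rootSet_def, Set.ncard_coe_finset]
  calc #((polyRad A).aroots K).toFinset
      ≤ ((polyRad A).aroots K).card := Multiset.toFinset_card_le _
    _ ≤ ((polyRad A).map (algebraMap F K)).natDegree := card_roots' _
    _ = (polyRad A).natDegree := natDegree_map _

end DistinctRoots

section Ramification

lemma roots_comp_le_dedup_add_roots_derivative {R : Type*} [CommRing R] [IsDomain R]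
    [DecidableEq R] {Q V : R[X]} (hQ : Q.Separable) (hV : derivative V ≠ 0) :
    (Q.comp V).roots ≤ (Q.comp V).roots.dedup + (derivative V).roots := by
  rw [Multiset.le_iff_count]
  intro x
  by_cases hx : x ∈ (Q.comp V).roots
  · have hroot : eval (V.eval x) Q = 0 := by
      simpa only [IsRoot, eval_comp] using isRoot_of_mem_roots hx
    have hunram : ¬ IsRoot ((derivative Q).comp V) x := by
      rw [IsRoot, eval_comp]
      exact hQ.eval₂_derivative_ne_zero (RingHom.id R) hroot
    have hne : derivative (Q.comp V) ≠ 0 := by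
      rw [derivative_comp]
      exact mul_ne_zero hV fun h => hunram (by rw [h, IsRoot, eval_zero])
    have hmult : (derivative (Q.comp V)).rootMultiplicity x =
        (derivative V).rootMultiplicity x := by
      rw [derivative_comp] at hne ⊢
      rw [rootMultiplicity_mul hne, rootMultiplicity_eq_zero hunram, add_zero]
    have hdrop := rootMultiplicity_sub_one_le_derivative_rootMultiplicity_of_ne_zero _ x hne
    rw [Multiset.count_add, Multiset.count_dedup, if_pos hx, count_roots, count_roots]
    omega
  · simp only [Multiset.count_eq_zero_of_notMem hx, zero_le]

variable {F K : Type*} [Field F] [Field K] [IsAlgClosed K]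

lemma card_mul_natDegree_le_ncard_preimage_add {V : K[X]} (hV : derivative V ≠ 0)
    (Z : Finset K) :
    #Z * V.natDegree ≤ ((V.eval ·) ⁻¹' (Z : Set K)).ncard + (derivative V).natDegree := by
  classical
  set Q : K[X] := ∏ z ∈ Z, (X - C z) with hQ_def
  have hQ : Q.Separable := separable_prod_X_sub_C_iff'.2 fun _ _ _ _ h => h
  have hQV : Q.comp V ≠ 0 := fun h => by
    rcases comp_eq_zero_iff.1 h with hQ0 | ⟨-, hVC⟩
    · exact hQ.ne_zero hQ0
    · exact hV (by rw [hVC, derivative_C])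
  have hroots : (V.eval ·) ⁻¹' (Z : Set K) = (Q.comp V).roots.toFinset := by
    ext x
    rw [mem_coe, Multiset.mem_toFinset, mem_roots hQV]
    simp [hQ_def, eval_prod, prod_eq_zero_iff, sub_eq_zero]
  calc #Z * V.natDegree = (Q.comp V).natDegree := by
        rw [natDegree_comp, natDegree_finsetProd_X_sub_C_eq_card]
    _ = (Q.comp V).roots.card := (IsAlgClosed.card_roots_eq_natDegree).symm
    _ ≤ ((Q.comp V).roots.dedup + (derivative V).roots).card :=
        Multiset.card_le_card (roots_comp_le_dedup_add_roots_derivative hQ hV)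
    _ ≤ ((V.eval ·) ⁻¹' (Z : Set K)).ncard + (derivative V).natDegree := by
        rw [Multiset.card_add, hroots, Set.ncard_coe_finset]
        exact Nat.add_le_add_left (card_roots' _) _

lemma card_mul_natDegree_le_natDegree_polyRad_add [Algebra F K] {U A : F[X]}
    (hU : derivative U ≠ 0) (hA : A ≠ 0) {Z : Finset K}
    (hZ : ∀ x : K, aeval x U ∈ Z → aeval x A = 0) :
    #Z * U.natDegree ≤ (polyRad A).natDegree + (derivative U).natDegree := by
  have hV : derivative (U.map (algebraMap F K)) ≠ 0 := by
    rw [derivative_map]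
    exact map_ne_zero hU
  have hsub : ((U.map (algebraMap F K)).eval ·) ⁻¹' (Z : Set K) ⊆ A.rootSet K := fun x hx =>
    (mem_rootSet_of_ne hA).2 (hZ x (by simpa using hx))
  calc #Z * U.natDegree
      ≤ (((U.map (algebraMap F K)).eval ·) ⁻¹' (Z : Set K)).ncard + (derivative U).natDegree := by
        simpa only [derivative_map, natDegree_map] using
          card_mul_natDegree_le_ncard_preimage_add hV Z
    _ ≤ (polyRad A).natDegree + (derivative U).natDegree := by
        gcongr
        exact (Set.ncard_le_ncard hsub (rootSet_finite A K)).trans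
          (ncard_rootSet_le_natDegree_polyRad hA)

end Ramification

section PrimeToPPart

lemma sub_one_mul_sum_inv_pow {k : Type*} [Field k] {x : k} (hx : x ≠ 0) (n : ℕ) :
    (x - 1) * ∑ j ∈ Icc 1 n, (x ^ j)⁻¹ = 1 - (x ^ n)⁻¹ := by
  induction n with
  | zero => simp
  | succ n ih =>
    rw [sum_Icc_succ_top (by omega), mul_add, ih, pow_succ]
    field_simp
    ring

lemma card_filter_dvd_Ioc_le {a b d : ℕ} (hab : a ≤ b) (hd : 0 < d) :
    (#{k ∈ Ioc a b | d ∣ k} : ℝ) ≤ (b - a) / d + 1 := by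
  have hcount : (#{k ∈ Ioc a b | d ∣ k} : ℤ) = max (⌊(b : ℚ) / d⌋ - ⌊(a : ℚ) / d⌋) 0 := by
    simpa [Nat.modEq_zero_iff_dvd] using Nat.Ioc_filter_modEq_card a b hd 0
  have hfloor : ⌊(a : ℚ) / d⌋ ≤ ⌊(b : ℚ) / d⌋ := by gcongr
  rw [max_eq_left (sub_nonneg.2 hfloor)] at hcount
  have hle : (#{k ∈ Ioc a b | d ∣ k} : ℚ) ≤ (b - a) / d + 1 := by
    have hcast : (#{k ∈ Ioc a b | d ∣ k} : ℚ) = ⌊(b : ℚ) / d⌋ - ⌊(a : ℚ) / d⌋ := by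
      exact_mod_cast hcount
    rw [hcast, sub_div]
    linarith [Int.floor_le ((b : ℚ) / d), Int.lt_floor_add_one ((a : ℚ) / d)]
  simpa using (Rat.cast_le (K := ℝ)).2 hle

variable {p : ℕ}

lemma inv_pow_factorization_eq (hp : p.Prime) {k b : ℕ} (hk : k ≠ 0) (hkb : k ≤ p ^ b) :
    ((p : ℝ) ^ k.factorization p)⁻¹ =
      1 - (p - 1) * ∑ j ∈ Icc 1 b with p ^ j ∣ k, ((p : ℝ) ^ j)⁻¹ := by
  rw [← Nat.Ico_filter_pow_dvd_eq hp hk hkb, ← Nat.Icc_factorization_eq_pow_dvd k hp,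
    sub_one_mul_sum_inv_pow (Nat.cast_ne_zero.2 hp.ne_zero), sub_sub_cancel]

lemma sub_one_mul_sum_card_filter_pow_dvd_le (hp : p.Prime) {a b : ℕ} (hab : a ≤ b) (N : ℕ) :
    ((p : ℝ) - 1) * ∑ j ∈ Icc 1 N, #{k ∈ Ioc a b | p ^ j ∣ k} * ((p : ℝ) ^ j)⁻¹ ≤
      (b - a) / (p + 1) + 1 := by
  have hp1 : (1 : ℝ) < p := by exact_mod_cast hp.one_lt
  have : (0 : ℝ) ≤ p - 1 := by linarith
  have hba : (0 : ℝ) ≤ b - a := sub_nonneg.2 (by exact_mod_cast hab)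
  have hgeom {x : ℝ} (hx : 1 < x) : ∑ j ∈ Icc 1 N, (x ^ j)⁻¹ ≤ 1 / (x - 1) := by
    rw [le_div_iff₀' (sub_pos.2 hx), sub_one_mul_sum_inv_pow (by positivity)]
    exact sub_le_self _ (by positivity)
  have hterm (j : ℕ) : #{k ∈ Ioc a b | p ^ j ∣ k} * ((p : ℝ) ^ j)⁻¹ ≤
      (b - a) * (((p : ℝ) ^ 2) ^ j)⁻¹ + ((p : ℝ) ^ j)⁻¹ := by
    calc #{k ∈ Ioc a b | p ^ j ∣ k} * ((p : ℝ) ^ j)⁻¹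
        ≤ ((b - a) / (p ^ j : ℕ) + 1) * ((p : ℝ) ^ j)⁻¹ := by
          gcongr
          exact card_filter_dvd_Ioc_le hab (pow_pos hp.pos j)
      _ = (b - a) * (((p : ℝ) ^ 2) ^ j)⁻¹ + ((p : ℝ) ^ j)⁻¹ := by
          rw [pow_right_comm]
          push_cast
          field_simp
  calc ((p : ℝ) - 1) * ∑ j ∈ Icc 1 N, #{k ∈ Ioc a b | p ^ j ∣ k} * ((p : ℝ) ^ j)⁻¹
      ≤ (p - 1) * ∑ j ∈ Icc 1 N, ((b - a) * (((p : ℝ) ^ 2) ^ j)⁻¹ + ((p : ℝ) ^ j)⁻¹) := by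
        gcongr with j
        exact hterm j
    _ = (p - 1) * ((b - a) * ∑ j ∈ Icc 1 N, (((p : ℝ) ^ 2) ^ j)⁻¹ +
          ∑ j ∈ Icc 1 N, ((p : ℝ) ^ j)⁻¹) := by
        rw [sum_add_distrib, mul_sum]
    _ ≤ (p - 1) * ((b - a) * (1 / ((p : ℝ) ^ 2 - 1)) + 1 / (p - 1)) := by
        gcongr
        · exact hgeom (by nlinarith)
        · exact hgeom hp1
    _ = (b - a) / (p + 1) + 1 := by
        have hsub : (p : ℝ) - 1 ≠ 0 := by linarith
        have hsq : (p : ℝ) ^ 2 - 1 = (p - 1) * (p + 1) := by ring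
        rw [hsq]
        field_simp

lemma le_sum_Ioc_inv_pow_factorization (hp : p.Prime) {a b : ℕ} (hab : a ≤ b) :
    (p : ℝ) / (p + 1) * (b - a) - 1 ≤ ∑ k ∈ Ioc a b, ((p : ℝ) ^ k.factorization p)⁻¹ := by
  have hexpand : ∑ k ∈ Ioc a b, ((p : ℝ) ^ k.factorization p)⁻¹ =
      (b - a) - (p - 1) * ∑ j ∈ Icc 1 b, #{k ∈ Ioc a b | p ^ j ∣ k} * ((p : ℝ) ^ j)⁻¹ := by
    calc ∑ k ∈ Ioc a b, ((p : ℝ) ^ k.factorization p)⁻¹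
        = ∑ k ∈ Ioc a b, (1 - ((p : ℝ) - 1) * ∑ j ∈ Icc 1 b with p ^ j ∣ k, ((p : ℝ) ^ j)⁻¹) := by
          refine sum_congr rfl fun k hk => ?_
          obtain ⟨hak, hkb⟩ := mem_Ioc.1 hk
          exact inv_pow_factorization_eq hp (by omega)
            (hkb.trans (Nat.lt_pow_self hp.one_lt).le)
      _ = _ := by
          simp only [sum_sub_distrib, sum_const, Nat.card_Ioc, nsmul_eq_mul, mul_one,
            Nat.cast_sub hab, ← mul_sum, sum_filter]
          rw [sum_comm]
          simp only [← sum_filter, sum_const, nsmul_eq_mul]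
  have hsplit : (p : ℝ) / (p + 1) * (b - a) = (b - a) - (b - a) / (p + 1) := by
    field_simp
    ring
  linarith [sub_one_mul_sum_card_filter_pow_dvd_le hp hab b]

lemma le_sum_Ioc_ordCompl (hp : p.Prime) {a b : ℕ} (hab : a ≤ b) :
    (a : ℝ) * (p / (p + 1) * (b - a) - 1) ≤ ∑ k ∈ Ioc a b, ((ordCompl[p] k : ℕ) : ℝ) := by
  calc (a : ℝ) * (p / (p + 1) * (b - a) - 1)
      ≤ a * ∑ k ∈ Ioc a b, ((p : ℝ) ^ k.factorization p)⁻¹ := by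
        gcongr
        exact le_sum_Ioc_inv_pow_factorization hp hab
    _ ≤ ∑ k ∈ Ioc a b, ((ordCompl[p] k : ℕ) : ℝ) := by
        rw [mul_sum]
        gcongr with k hk
        rw [Nat.cast_div (Nat.ordProj_dvd k p) (by exact_mod_cast (pow_pos hp.pos _).ne'),
          Nat.cast_pow, div_eq_mul_inv]
        gcongr
        exact (mem_Ioc.1 hk).1.le

end PrimeToPPart

section RootsOfUnity

lemma sum_card_le_card_biUnion_add {ι α : Type*} [DecidableEq α] {I : Finset ι}
    {s : ι → Finset α} {B : Finset α}
    (hB : (I : Set ι).Pairwise fun i j => s i ∩ s j ⊆ B) :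
    ∑ i ∈ I, #(s i) ≤ #(I.biUnion s) + #I * #B := by
  have hdisj : (I : Set ι).PairwiseDisjoint fun i => s i \ B := fun i hi j hj hij =>
    disjoint_left.2 fun x hxi hxj => (mem_sdiff.1 hxi).2 <|
      hB hi hj hij (mem_inter.2 ⟨(mem_sdiff.1 hxi).1, (mem_sdiff.1 hxj).1⟩)
  calc ∑ i ∈ I, #(s i) ≤ ∑ i ∈ I, (#(s i \ B) + #B) :=
        sum_le_sum fun _ _ => card_le_card_sdiff_add_card
    _ = #(I.biUnion fun i => s i \ B) + #I * #B := by
        rw [sum_add_distrib, card_biUnion hdisj, sum_const, smul_eq_mul]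
    _ ≤ #(I.biUnion s) + #I * #B :=
        Nat.add_le_add_right (card_le_card (biUnion_mono fun _ _ => sdiff_subset)) _

lemma nthRootsFinset_inter_subset {R : Type*} [CommRing R] [IsDomain R] [DecidableEq R]
    {k l : ℕ} (hk : 0 < k) (hkl : k < l) :
    nthRootsFinset k (1 : R) ∩ nthRootsFinset l 1 ⊆ nthRootsFinset (l - k) 1 := by
  intro x hx
  rw [mem_inter, mem_nthRootsFinset hk, mem_nthRootsFinset (hk.trans hkl)] at hx
  rw [mem_nthRootsFinset (Nat.sub_pos_of_lt hkl)]
  calc x ^ (l - k) = x ^ (l - k) * x ^ k := by rw [hx.1, mul_one]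
    _ = 1 := by rw [← pow_add, Nat.sub_add_cancel hkl.le, hx.2]

lemma card_nthRootsFinset_le {R : Type*} [CommRing R] [IsDomain R] (k : ℕ) (a : R) :
    #(nthRootsFinset k a) ≤ k := by
  classical
  rw [nthRootsFinset_def]
  exact (Multiset.toFinset_card_le _).trans (card_nthRoots k a)

lemma sum_card_nthRootsFinset_le_card_biUnion_add {R : Type*} [CommRing R] [IsDomain R]
    [DecidableEq R] (a M : ℕ) :
    ∑ k ∈ Ioc a (a + M), #(nthRootsFinset k (1 : R)) ≤
      #((Ioc a (a + M)).biUnion fun k => nthRootsFinset k (1 : R)) + M ^ 3 := by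
  set B : Finset R := (range M).biUnion fun d => nthRootsFinset d 1
  have hB : #B ≤ M * M := by
    simpa only [card_range] using card_biUnion_le_card_mul (range M) _ M fun d hd =>
      (card_nthRootsFinset_le d 1).trans (mem_range.1 hd).le
  have hinter : (Ioc a (a + M) : Set ℕ).Pairwise fun k l =>
      nthRootsFinset k (1 : R) ∩ nthRootsFinset l 1 ⊆ B := by
    have hlt {k l : ℕ} (hk : k ∈ Ioc a (a + M)) (hl : l ∈ Ioc a (a + M)) (hkl : k < l) :
        nthRootsFinset k (1 : R) ∩ nthRootsFinset l 1 ⊆ B := by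
      rw [mem_Ioc] at hk hl
      exact (nthRootsFinset_inter_subset (by omega) hkl).trans
        (subset_biUnion_of_mem (fun d => nthRootsFinset d (1 : R)) (mem_range.2 (by omega)))
    intro k hk l hl hkl
    rcases hkl.lt_or_gt with hkl | hlk
    · exact hlt hk hl hkl
    · exact inter_comm (nthRootsFinset l (1 : R)) _ ▸ hlt hl hk hlk
  calc ∑ k ∈ Ioc a (a + M), #(nthRootsFinset k (1 : R))
      ≤ #((Ioc a (a + M)).biUnion fun k => nthRootsFinset k (1 : R)) + M * #B := by
        simpa only [Nat.card_Ioc, Nat.add_sub_cancel_left] using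
          sum_card_le_card_biUnion_add hinter
    _ ≤ #((Ioc a (a + M)).biUnion fun k => nthRootsFinset k (1 : R)) + M * (M * M) := by gcongr
    _ = _ := by ring

lemma card_nthRootsFinset_one_eq_ordCompl {K : Type*} [Field K] [IsAlgClosed K] (p : ℕ)
    [Fact p.Prime] [CharP K p] {k : ℕ} (hk : k ≠ 0) :
    #(nthRootsFinset k (1 : K)) = ordCompl[p] k := by
  have hprime : p.Prime := Fact.out
  have : ExpChar K p := ExpChar.prime hprime
  have hset : nthRootsFinset k (1 : K) = nthRootsFinset (ordCompl[p] k) 1 := by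
    ext x
    rw [mem_nthRootsFinset (Nat.pos_of_ne_zero hk), mem_nthRootsFinset (Nat.ordCompl_pos p hk),
      ← ExpChar.pow_prime_pow_mul_eq_one_iff p (k.factorization p) (ordCompl[p] k),
      Nat.ordProj_mul_ordCompl_eq_self]
  have : NeZero ((ordCompl[p] k : ℕ) : K) :=
    ⟨by rw [Ne, CharP.cast_eq_zero_iff K p]; exact Nat.not_dvd_ordCompl hprime hk⟩
  obtain ⟨ζ, hζ⟩ := HasEnoughRootsOfUnity.exists_primitiveRoot K (ordCompl[p] k)
  rw [hset, hζ.card_nthRootsFinset]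

lemma le_card_biUnion_Ioc_nthRootsFinset {K : Type*} [Field K] [IsAlgClosed K] [DecidableEq K]
    (p : ℕ) [hp : Fact p.Prime] [CharP K p] (a M : ℕ) :
    (a : ℝ) * (p / (p + 1) * M - 1) - M ^ 3 ≤
      #((Ioc a (a + M)).biUnion fun k => nthRootsFinset k (1 : K)) := by
  have hwindow := le_sum_Ioc_ordCompl hp.out (Nat.le_add_right a M)
  rw [Nat.cast_add, add_sub_cancel_left] at hwindow
  have hcard : ∑ k ∈ Ioc a (a + M), #(nthRootsFinset k (1 : K)) =
      ∑ k ∈ Ioc a (a + M), ordCompl[p] k :=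
    sum_congr rfl fun k hk => card_nthRootsFinset_one_eq_ordCompl p (by grind)
  have hoverlap := sum_card_nthRootsFinset_le_card_biUnion_add (R := K) a M
  rw [hcard] at hoverlap
  rw [sub_le_iff_le_add]
  exact hwindow.trans (by exact_mod_cast hoverlap)

lemma le_card_biUnion_Icc_nthRootsFinset {K : Type*} [Field K] [IsAlgClosed K]
    [DecidableEq K] (p : ℕ) [Fact p.Prime] [CharP K p] {m n : ℕ} (hmn : m < n) :
    (p : ℝ) / (p + 1) * m * n - n - 2 * (m + 1) ^ 3 + 1 ≤
      #((Icc (n - m) n).biUnion fun k => nthRootsFinset k (1 : K)) := by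
  obtain ⟨a, rfl⟩ : ∃ a, n = a + (m + 1) := ⟨n - (m + 1), by omega⟩
  have hwindow : Icc (a + (m + 1) - m) (a + (m + 1)) = Ioc a (a + (m + 1)) := by
    ext k
    rw [mem_Icc, mem_Ioc]
    omega
  have hcount := le_card_biUnion_Ioc_nthRootsFinset (K := K) p a (m + 1)
  rw [hwindow]
  refine le_trans ?_ hcount
  have hρ0 : 0 ≤ (p : ℝ) / (p + 1) := by positivity
  have hρ1 : (p : ℝ) / (p + 1) ≤ 1 := div_le_one_of_le₀ (by linarith) (by positivity)
  generalize (p : ℝ) / (p + 1) = ρ at hρ0 hρ1 ⊢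
  have hm : (0 : ℝ) ≤ m := m.cast_nonneg
  have hρm : ρ * (m * (m + 1)) ≤ m * (m + 1) := mul_le_of_le_one_left (by positivity) hρ1
  have hρa : 0 ≤ a * ρ := by positivity
  push_cast
  linarith [pow_nonneg hm 2, pow_nonneg hm 3]

end RootsOfUnity

section PowSubOneProduct

variable {R S : Type*} [CommRing R]

lemma prod_pow_sub_one_ne_zero [IsDomain R] {U : R[X]} (hU : 0 < U.natDegree)
    {m n : ℕ} (hmn : m < n) :
    ∏ i ∈ range (m + 1), (U ^ (n - i) - 1) ≠ 0 := by
  refine prod_ne_zero_iff.2 fun i hi h => ?_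
  have hdeg := congrArg natDegree (sub_eq_zero.1 h)
  rw [natDegree_pow, natDegree_one] at hdeg
  have hin : i < m + 1 := mem_range.1 hi
  have hpos : 0 < (n - i) * U.natDegree := Nat.mul_pos (by omega) hU
  omega

lemma aeval_prod_pow_sub_one_eq_zero [CommRing S] [Algebra R S] {U : R[X]} {x : S}
    {m n k : ℕ} (hk : k ∈ Icc (n - m) n) (hx : aeval x U ^ k = 1) :
    aeval x (∏ i ∈ range (m + 1), (U ^ (n - i) - 1)) = 0 := by
  rw [mem_Icc] at hk
  rw [map_prod]
  refine prod_eq_zero (i := n - k) (mem_range.2 (by omega)) ?_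
  rw [Nat.sub_sub_self hk.2, map_sub, map_pow, map_one, hx, sub_self]

end PowSubOneProduct

lemma alternating_inv_le_div_add_one {x : ℝ} (hx : 0 < x) :
    1 - 1 / x + 1 / x ^ 2 - 1 / x ^ 3 ≤ x / (x + 1) := by
  have hdiff : x / (x + 1) - (1 - 1 / x + 1 / x ^ 2 - 1 / x ^ 3) = 1 / (x ^ 3 * (x + 1)) := by
    field_simp
    ring
  have hpos : 0 < 1 / (x ^ 3 * (x + 1)) := by positivity
  linarith

theorem radical_degree_lower_bound_partial_general {F : Type*} [Field F]
    (p : ℕ) [Fact p.Prime] [CharP F p]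
    (U : F[X]) (hU : Polynomial.derivative U ≠ 0) (m n : ℕ) (hmn : m < n) :
    (U.natDegree : ℝ) * (p / (p + 1)) * m * n - U.natDegree * n - 2 * U.natDegree * (m + 1) ^ 3 ≤
      ((polyRad (∏ i ∈ Finset.range (m + 1), (U ^ (n - i) - 1))).natDegree : ℝ) := by
  classical
  let K := AlgebraicClosure F
  have : CharP K p := charP_of_injective_algebraMap (algebraMap F K).injective p
  set A := ∏ i ∈ range (m + 1), (U ^ (n - i) - 1)
  have hA : A ≠ 0 := prod_pow_sub_one_ne_zero
    (Nat.pos_of_ne_zero (mt derivative_of_natDegree_zero hU)) hmn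
  set Z : Finset K := (Icc (n - m) n).biUnion fun k => nthRootsFinset k 1
  have hZ (x : K) (hx : aeval x U ∈ Z) : aeval x A = 0 := by
    obtain ⟨k, hk, hxk⟩ := mem_biUnion.1 hx
    have hkpos : 0 < k := (Nat.sub_pos_of_lt hmn).trans_le (mem_Icc.1 hk).1
    exact aeval_prod_pow_sub_one_eq_zero hk ((mem_nthRootsFinset hkpos _).1 hxk)
  have hroots : (p : ℝ) / (p + 1) * m * n - n - 2 * (m + 1) ^ 3 + 1 ≤ #Z :=
    le_card_biUnion_Icc_nthRootsFinset p hmn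
  have hderiv : (derivative U).natDegree ≤ U.natDegree :=
    (natDegree_derivative_le U).trans (Nat.sub_le _ _)
  have hrad : (#Z : ℝ) * U.natDegree ≤ (polyRad A).natDegree + U.natDegree := by
    exact_mod_cast (card_mul_natDegree_le_natDegree_polyRad_add hU hA hZ).trans
      (Nat.add_le_add_left hderiv _)
  linarith [mul_le_mul_of_nonneg_right hroots (Nat.cast_nonneg (α := ℝ) U.natDegree)]

/-- Let `𝔽` be a finite field of characteristic `p`, and `U ∈ 𝒜 = 𝔽[t]` with `U' ≠ 0` and
`δ = deg U`. There is a constant `C₈ > 0` depending only on `p` and `U`, and for each `m` a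
constant `C₉ > 0` depending only on `m, p, U`, such that for all integers `0 ≤ m < n`,
`d_{m,n,U} ≥ δ (1 - 1/p + 1/p² - 1/p³) m n - C₈ n - C₉`, where `d_{m,n,U}` is the degree of
the radical of `Δ_{m,n,U} = (Uⁿ - 1)(U^{n-1} - 1) ⋯ (U^{n-m} - 1)`. -/
theorem radical_degree_lower_bound_partial {F : Type*} [Field F] [Fintype F]
    (p : ℕ) [Fact p.Prime] [CharP F p]
    (U : F[X]) (hU : Polynomial.derivative U ≠ 0) :
    ∃ C₈ : ℝ, 0 < C₈ ∧ ∀ m : ℕ, ∃ C₉ : ℝ, 0 < C₉ ∧ ∀ n : ℕ, m < n →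
      (U.natDegree : ℝ) * (1 - 1 / (p : ℝ) + 1 / (p : ℝ) ^ 2 - 1 / (p : ℝ) ^ 3) *
          (m : ℝ) * (n : ℝ) - C₈ * (n : ℝ) - C₉ ≤
        ((polyRad (∏ i ∈ Finset.range (m + 1), (U ^ (n - i) - 1))).natDegree : ℝ) := by
  have hdeg : 0 < U.natDegree := Nat.pos_of_ne_zero (mt derivative_of_natDegree_zero hU)
  refine ⟨U.natDegree, by positivity, fun m =>
    ⟨2 * U.natDegree * (m + 1) ^ 3, by positivity, fun n hmn => ?_⟩⟩
  refine le_trans ?_ (radical_degree_lower_bound_partial_general p U hU m n hmn)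
  gcongr
  exact alternating_inv_le_div_add_one (Nat.cast_pos.2 (Fact.out : p.Prime).pos)
end

section
/- For every n ∈ ℕ, q^n ≤ deg(∏_{P ∈ 𝒫⁺, deg(P) ≤ n} P) < 2·q^n, where the product is over all monic irreducible polynomials of degree at most n in 𝒜. -/
/-!
Write `[d] = X ^ q ^ d - X`. An irreducible `P` divides `[d]` exactly when `deg P ∣ d`, so the
irreducible divisors of `L = [1] [2] ⋯ [n]` are the irreducible polynomials of degree at most `n`,
and the product in question is the radical of `L`. The radical divides `L`, whose degree is
`q + q ^ 2 + ⋯ + q ^ n < 2 * q ^ n`; and it is divisible by the squarefree divisor `[n]` of `L`,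
whose degree is `q ^ n`.
-/

open Polynomial
open UniqueFactorizationMonoid

theorem sum_pow_lt_two_mul_pow {q n : ℕ} (hq : 2 ≤ q) {s : Finset ℕ} (hs : ∀ k ∈ s, k ≤ n) :
    ∑ k ∈ s, q ^ k < 2 * q ^ n := by
  have hsub : s ⊆ Finset.range (n + 1) := fun k hk => Finset.mem_range_succ_iff.2 (hs k hk)
  calc
    ∑ k ∈ s, q ^ k ≤ ∑ k ∈ Finset.range (n + 1), q ^ k := Finset.sum_le_sum_of_subset hsub
    _ = ∑ k ∈ Finset.range n, q ^ k + q ^ n := Finset.sum_range_succ _ n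
    _ < q ^ n + q ^ n :=
      Nat.add_lt_add_right (Nat.geomSum_lt hq fun _ => Finset.mem_range.1) _
    _ = 2 * q ^ n := (two_mul _).symm

theorem finprod_monic_irreducible_dvd_eq_radical {K : Type*} [Field K] [DecidableEq K] {f : K[X]}
    (hf : f ≠ 0) : ∏ᶠ P ∈ {P : K[X] | P.Monic ∧ Irreducible P ∧ P ∣ f}, P = radical f := by
  have hset : {P : K[X] | P.Monic ∧ Irreducible P ∧ P ∣ f} = primeFactors f := by
    ext P
    rw [Finset.mem_coe, mem_primeFactors, Polynomial.mem_normalizedFactors_iff hf]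
    exact and_left_comm
  rw [hset, finprod_mem_coe_finset]
  rfl

theorem separable_X_pow_card_pow_sub_X (R : Type*) [CommRing R] [Finite R] {n : ℕ} (hn : n ≠ 0) :
    (X ^ Nat.card R ^ n - X : R[X]).Separable := by
  have := Fintype.ofFinite R
  obtain ⟨p, _⟩ := CharP.exists R
  have hp : p ∣ Nat.card R := by
    rw [← CharP.cast_eq_zero_iff R p, Nat.card_eq_fintype_card, Nat.cast_card_eq_zero]
  exact galois_poly_separable p _ (dvd_pow hp hn)

section FiniteField

variable (F : Type*) [Field F]

/-- Carlitz's polynomial `L_n = [1] [2] ⋯ [n]`, where `[d] = X ^ q ^ d - X` and `q` is the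
cardinality of `F`. Its radical is the product of the monic irreducible polynomials of degree at
most `n`. -/
noncomputable def carlitzL (n : ℕ) : F[X] :=
  ∏ d ∈ Finset.Icc 1 n, (X ^ Nat.card F ^ d - X)

variable {F} in
theorem dvd_carlitzL_iff_of_irreducible [Finite F] {P : F[X]} (hP : Irreducible P) {n : ℕ} :
    P ∣ carlitzL F n ↔ P.natDegree ≤ n := by
  rw [carlitzL, hP.prime.dvd_finsetProd_iff]
  simp only [← hP.natDegree_dvd_iff_dvd_X_pow_card_pow_sub_X, Finset.mem_Icc]
  constructor
  · rintro ⟨d, ⟨hd, hdn⟩, hPd⟩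
    exact (Nat.le_of_dvd hd hPd).trans hdn
  · exact fun hPn => ⟨P.natDegree, ⟨hP.natDegree_pos, hPn⟩, dvd_rfl⟩

variable [Finite F]

theorem carlitzL_ne_zero (n : ℕ) : carlitzL F n ≠ 0 :=
  Finset.prod_ne_zero_iff.2 fun _ hd =>
    FiniteField.X_pow_card_pow_sub_X_ne_zero F
      (Nat.one_le_iff_ne_zero.1 (Finset.mem_Icc.1 hd).1) Finite.one_lt_card

theorem natDegree_carlitzL (n : ℕ) :
    (carlitzL F n).natDegree = ∑ d ∈ Finset.Icc 1 n, Nat.card F ^ d := by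
  rw [carlitzL, natDegree_prod _ _ (Finset.prod_ne_zero_iff.1 (carlitzL_ne_zero F n))]
  exact Finset.sum_congr rfl fun d hd =>
    FiniteField.X_pow_card_pow_sub_X_natDegree_eq F
      (Nat.one_le_iff_ne_zero.1 (Finset.mem_Icc.1 hd).1) Finite.one_lt_card

theorem finprod_monic_irreducible_natDegree_le_eq_radical [DecidableEq F] (n : ℕ) :
    ∏ᶠ P ∈ {P : F[X] | P.Monic ∧ Irreducible P ∧ P.natDegree ≤ n}, P =
      radical (carlitzL F n) := by
  have hset : {P : F[X] | P.Monic ∧ Irreducible P ∧ P.natDegree ≤ n} =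
      {P | P.Monic ∧ Irreducible P ∧ P ∣ carlitzL F n} :=
    Set.ext fun _ => and_congr_right fun _ => and_congr_right fun hP =>
      (dvd_carlitzL_iff_of_irreducible hP).symm
  rw [hset, finprod_monic_irreducible_dvd_eq_radical (carlitzL_ne_zero F n)]

theorem natDegree_radical_carlitzL_lt [DecidableEq F] (n : ℕ) :
    (radical (carlitzL F n)).natDegree < 2 * Nat.card F ^ n :=
  calc
    (radical (carlitzL F n)).natDegree ≤ (carlitzL F n).natDegree :=
      natDegree_le_of_dvd radical_dvd_self (carlitzL_ne_zero F n)
    _ = ∑ d ∈ Finset.Icc 1 n, Nat.card F ^ d := natDegree_carlitzL F n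
    _ < 2 * Nat.card F ^ n :=
      sum_pow_lt_two_mul_pow Finite.one_lt_card fun _ hd => (Finset.mem_Icc.1 hd).2

theorem card_pow_le_natDegree_radical_carlitzL [DecidableEq F] {n : ℕ} (hn : n ≠ 0) :
    Nat.card F ^ n ≤ (radical (carlitzL F n)).natDegree := by
  have hdvd : X ^ Nat.card F ^ n - X ∣ carlitzL F n :=
    Finset.dvd_prod_of_mem _ (Finset.mem_Icc.2 ⟨Nat.one_le_iff_ne_zero.2 hn, le_rfl⟩)
  have hrad : IsRadical (X ^ Nat.card F ^ n - X : F[X]) :=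
    (separable_X_pow_card_pow_sub_X F hn).squarefree.isRadical
  calc
    Nat.card F ^ n = (X ^ Nat.card F ^ n - X : F[X]).natDegree :=
      (FiniteField.X_pow_card_pow_sub_X_natDegree_eq F hn Finite.one_lt_card).symm
    _ ≤ (radical (carlitzL F n)).natDegree :=
      natDegree_le_of_dvd ((dvd_radical_iff hrad (carlitzL_ne_zero F n)).2 hdvd) radical_ne_zero

end FiniteField

/-- For every `n ∈ ℕ`, `q^n ≤ deg(∏_{P monic irreducible, deg P ≤ n} P) < 2 q^n`, where
`q` is the cardinality of the finite field `𝔽` and the product is over all monic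
irreducible polynomials in `𝒜 = 𝔽[t]` of degree at most `n`. -/
theorem degree_product_of_monic_irreducibles {F : Type*} [Field F] [Fintype F]
    (q : ℕ) (hq : q = Fintype.card F) (n : ℕ) (hn : 1 ≤ n) :
    q ^ n ≤ (∏ᶠ P ∈ {P : F[X] | P.Monic ∧ Irreducible P ∧ P.natDegree ≤ n}, P).natDegree ∧
      (∏ᶠ P ∈ {P : F[X] | P.Monic ∧ Irreducible P ∧ P.natDegree ≤ n}, P).natDegree
        < 2 * q ^ n := by
  classical
  rw [hq, Fintype.card_eq_nat_card, finprod_monic_irreducible_natDegree_le_eq_radical]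
  exact ⟨card_pow_le_natDegree_radical_carlitzL F (Nat.one_le_iff_ne_zero.1 hn),
    natDegree_radical_carlitzL_lt F n⟩
end
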